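/- Let n ≥ 1 and k ≥ 4 be natural numbers. Let A be a real-valued family indexed by k-tuples of indices in {1,…,n}, invariant under every permutation of its first k−2 arguments and under swapping its last two arguments, and satisfying the symmetrization condition: for every tuple (p₁,…,p_k) one has Σ_{1≤i<j≤k} A(p₁,…,p̂ᵢ,…,p̂ⱼ,…,p_k, pᵢ, pⱼ) = 0, where the hats mean that the entries pᵢ, pⱼ are removed from their positions and placed (in this order) as the last two arguments. Then 2·T + (k−2)·((k−3)·N + 4·M) = 0, where T := Σ_p A(p)² (sum over all k-tuples p), M := Σ_{K,a,b,c} A(K,a,b,c)·A(K,c,a,b) (sum over all (k−3)-tuples K and indices a,b,c in {1,…,n}), and N := Σ_{K,a,b,c,d} A(K,c,d,a,b)·A(K,a,b,c,d) (sum over all (k−4)-tuples K and indices a,b,c,d in {1,…,n}). -/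

import Mathlib

/-- The order-preserving embedding of `Fin (k-2)` into `Fin k` avoiding the positions
`i` and `j` (intended for `i < j`). -/
def dropPair {k : ℕ} (i j : Fin k) (m : Fin (k - 2)) : Fin k :=
  if (m : ℕ) < (i : ℕ) then ⟨(m : ℕ), by have := m.isLt; omega⟩
  else if (m : ℕ) + 1 < (j : ℕ) then ⟨(m : ℕ) + 1, by have := m.isLt; omega⟩
  else ⟨(m : ℕ) + 2, by have := m.isLt; omega⟩

/-- The tuple obtained from `p` by removing the entries at positions `i` and `j`
(keeping the order of the remaining entries) and placing `p i`, `p j` (in this order)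
as the last two entries. -/
def hatTuple {n k : ℕ} (p : Fin k → Fin n) (i j : Fin k) : Fin k → Fin n :=
  fun m =>
    if h : (m : ℕ) < k - 2 then p (dropPair i j ⟨(m : ℕ), h⟩)
    else if (m : ℕ) = k - 2 then p i
    else p j

/-- The `k`-tuple whose first `k-3` entries are given by `K` and whose last three
entries are `a`, `b`, `c` (in this order). -/
def padEnd3 {n k : ℕ} (K : Fin (k - 3) → Fin n) (a b c : Fin n) : Fin k → Fin n :=
  fun m =>
    if h : (m : ℕ) < k - 3 then K ⟨(m : ℕ), h⟩
    else if (m : ℕ) = k - 3 then a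
    else if (m : ℕ) = k - 2 then b
    else c

/-- The `k`-tuple whose first `k-4` entries are given by `K` and whose last four
entries are `a`, `b`, `c`, `d` (in this order). -/
def padEnd4 {n k : ℕ} (K : Fin (k - 4) → Fin n) (a b c d : Fin n) : Fin k → Fin n :=
  fun m =>
    if h : (m : ℕ) < k - 4 then K ⟨(m : ℕ), h⟩
    else if (m : ℕ) = k - 4 then a
    else if (m : ℕ) = k - 3 then b
    else if (m : ℕ) = k - 2 then c
    else d

/-
Write `S` for the set of the last two slots. The contraction of `A` with a rearrangement `f` of its
slots depends only on the double coset of `f` by the stabilizer of `S`, that is, only on the overlap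
`#(S ∩ f • S) ∈ {0, 1, 2}`: these three values are `N`, `M` and `T`. Contract the vanishing
symmetrization of `A` with `A` itself: the term of the pair `{i, j}` is the value for the overlap
`#(S ∩ {i, j})`, and it remains to count the ordered pairs of distinct slots with each overlap:
`2`, `4 (k - 2)` and `(k - 2) (k - 3)` of them have overlap `2`, `1` and `0`.
-/

section Overlap

open Finset Function
open scoped Pointwise

theorem exists_perm_smul_eq_smul_eq {ι : Type*} [Finite ι] [DecidableEq ι] {S S' P P' : Finset ι}
    (hS : #S = #S') (hP : #P = #P') (hSP : #(S ∩ P) = #(S' ∩ P')) :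
    ∃ σ : Equiv.Perm ι, σ • S = S' ∧ σ • P = P' := by
  cases nonempty_fintype ι
  have hS_sdiff : #(S \ P) = #(S' \ P') := by
    have := card_sdiff_add_card_inter S P
    have := card_sdiff_add_card_inter S' P'
    omega
  have hP_sdiff : #(P \ S) = #(P' \ S') := by
    have := card_sdiff_add_card_inter P S
    have := card_sdiff_add_card_inter P' S'
    rw [inter_comm] at hSP
    rw [inter_comm S' P'] at hSP
    omega
  have hcompl : #(S ∪ P)ᶜ = #(S' ∪ P')ᶜ := by
    have := card_union_add_card_inter S P
    have := card_union_add_card_inter S' P'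
    rw [card_compl, card_compl]
    omega
  have hfiber (c : Bool × Bool) :
      Fintype.card {i // (decide (i ∈ S), decide (i ∈ P)) = c} =
        Fintype.card {i // (decide (i ∈ S'), decide (i ∈ P')) = c} := by
    rcases c with ⟨_ | _, _ | _⟩ <;> rw [Fintype.card_subtype, Fintype.card_subtype]
    · convert hcompl using 2 <;> ext <;> simp
    · convert hP_sdiff using 2 <;> ext <;> simp [and_comm]
    · convert hS_sdiff using 2 <;> ext <;> simp
    · convert hSP using 2 <;> ext <;> simp
  let σ : Equiv.Perm ι := Equiv.ofFiberEquiv fun c => Fintype.equivOfCardEq (hfiber c)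
  have hσ (i : ι) : (i ∈ S ↔ σ i ∈ S') ∧ (i ∈ P ↔ σ i ∈ P') := by
    have hcolor : (decide (σ i ∈ S'), decide (σ i ∈ P')) = (decide (i ∈ S), decide (i ∈ P)) :=
      Equiv.ofFiberEquiv_map (fun c => Fintype.equivOfCardEq (hfiber c)) i
    simpa only [Prod.mk.injEq, decide_eq_decide, iff_comm] using hcolor
  refine ⟨σ, ?_, ?_⟩ <;> rw [smul_eq_iff_eq_inv_smul] <;> ext i <;>
    simp [mem_inv_smul_finset_iff, hσ i]

variable {ι α R M : Type*}

/-- The contraction of a tensor `A`, indexed by families `p : ι → α`, with the tensor obtained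
from `A` by rearranging its slots along `f`. -/
def slotPairing [Fintype ι] [DecidableEq ι] [Fintype α] [CommSemiring R]
    (A : (ι → α) → R) (f : ι → ι) : R :=
  ∑ p, A p * A (p ∘ f)

/-- The tensor `A` is unchanged by every permutation of its slots preserving the set `S`. -/
def StabilizerInvariant [DecidableEq ι] (S : Finset ι) (A : (ι → α) → R) : Prop :=
  ∀ σ : Equiv.Perm ι, σ • S = S → ∀ p, A (p ∘ σ) = A p

theorem stabilizerInvariant_pair [DecidableEq ι] {A : (ι → α) → R} {u v : ι}
    (hfix : ∀ σ : Equiv.Perm ι, σ u = u → σ v = v → ∀ p, A (p ∘ σ) = A p)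
    (hswap : ∀ p, A (p ∘ Equiv.swap u v) = A p) : StabilizerInvariant {u, v} A := by
  intro σ hσ p
  rw [smul_finset_insert, smul_finset_singleton, ← coe_inj, coe_pair, coe_pair,
    Set.pair_eq_pair_iff] at hσ
  rcases hσ with ⟨hu, hv⟩ | ⟨hu, hv⟩
  · exact hfix σ hu hv p
  · rw [← hswap]
    exact hfix (σ * Equiv.swap u v) (by simpa using hv) (by simpa using hu) p

section SlotPairing

variable [Fintype ι] [DecidableEq ι] [Fintype α] [CommSemiring R] {A : (ι → α) → R}

theorem slotPairing_perm_comp {σ : Equiv.Perm ι} (hσ : ∀ p, A (p ∘ σ) = A p) (f : ι → ι) :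
    slotPairing A (σ ∘ f) = slotPairing A f := by
  calc ∑ p, A p * A (p ∘ σ ∘ f)
    _ = ∑ p, A (p ∘ σ) * A ((p ∘ σ) ∘ f) := by simp only [hσ, comp_assoc]
    _ = ∑ p, A p * A (p ∘ f) :=
      (σ.symm.arrowCongr (Equiv.refl α)).sum_comp fun p => A p * A (p ∘ f)

theorem slotPairing_comp_perm {σ : Equiv.Perm ι} (hσ : ∀ p, A (p ∘ σ) = A p) (f : ι → ι) :
    slotPairing A (f ∘ σ) = slotPairing A f := by
  simp only [slotPairing, ← comp_assoc, hσ]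

theorem StabilizerInvariant.slotPairing_congr {S : Finset ι} (hA : StabilizerInvariant S A)
    {f g : Equiv.Perm ι} (hfg : #(S ∩ f • S) = #(S ∩ g • S)) :
    slotPairing A f = slotPairing A g := by
  obtain ⟨σ, hσS, hσ⟩ := exists_perm_smul_eq_smul_eq (S := S) rfl (by simp) hfg.symm
  have hτ : (g⁻¹ * σ⁻¹ * f) • S = S := by
    rw [mul_smul, mul_smul, ← hσ, inv_smul_smul, inv_smul_smul]
  have hf : (f : ι → ι) = σ ∘ g ∘ (g⁻¹ * σ⁻¹ * f : Equiv.Perm ι) := by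
    ext i
    simp
  rw [hf, slotPairing_perm_comp (hA σ hσS), slotPairing_comp_perm (hA _ hτ)]

theorem StabilizerInvariant.exists_slotPairing_eq {S : Finset ι} (hA : StabilizerInvariant S A) :
    ∃ g : ℕ → R, ∀ f : Equiv.Perm ι, slotPairing A f = g #(S ∩ f • S) := by
  obtain ⟨g, hg⟩ := (factorsThrough_iff (f := fun f : Equiv.Perm ι => #(S ∩ f • S))
    (fun f : Equiv.Perm ι => slotPairing A f)).mp fun _ _ => hA.slotPairing_congr
  exact ⟨g, congrFun hg⟩

end SlotPairing

theorem two_nsmul_sum_lt [Fintype ι] [LinearOrder ι] [AddCommMonoid M] {F : ι → ι → M}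
    (hF : ∀ i j, F i j = F j i) :
    2 • ∑ i, ∑ j, (if i < j then F i j else 0) = ∑ x ∈ univ.offDiag, F x.1 x.2 := by
  have hsplit (i j : ι) : (if i ≠ j then F i j else 0) =
      (if i < j then F i j else 0) + if j < i then F j i else 0 := by
    rcases lt_trichotomy i j with h | rfl | h
    · simp [h, h.ne, h.not_gt]
    · simp
    · simp [h, h.ne', h.not_gt, hF i j]
  calc 2 • ∑ i, ∑ j, (if i < j then F i j else 0)
    _ = ∑ i, ∑ j, (if i < j then F i j else 0) + ∑ i, ∑ j, (if j < i then F j i else 0) := by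
      rw [two_nsmul, sum_comm (f := fun i j => if j < i then F j i else 0)]
    _ = ∑ i, ∑ j, if i ≠ j then F i j else 0 := by
      simp only [hsplit, sum_add_distrib]
    _ = ∑ x ∈ univ.offDiag, F x.1 x.2 := by
      rw [← Fintype.sum_prod_type', ← sum_filter]
      congr 1
      ext
      simp

theorem sum_offDiag_union [DecidableEq ι] [AddCommMonoid M] {S T : Finset ι} (hST : Disjoint S T)
    (F : ι × ι → M) :
    ∑ x ∈ (S ∪ T).offDiag, F x =
      ∑ x ∈ S.offDiag, F x + ∑ x ∈ T.offDiag, F x + ∑ x ∈ S ×ˢ T, F x + ∑ x ∈ T ×ˢ S, F x := by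
  rw [offDiag_union hST, sum_union, sum_union, sum_union]
  all_goals
    rw [disjoint_left] at hST ⊢
    grind

theorem sum_offDiag_card_inter [Fintype ι] [DecidableEq ι] [AddCommMonoid M] (S : Finset ι)
    (g : ℕ → M) :
    ∑ x ∈ univ.offDiag, g #(S ∩ {x.1, x.2}) =
      #S.offDiag • g 2 + #Sᶜ.offDiag • g 0 + (2 * (#S * #Sᶜ)) • g 1 := by
  have hboth : ∀ x ∈ S.offDiag, g #(S ∩ {x.1, x.2}) = g 2 := by
    intro x hx
    obtain ⟨hi, hj, hne⟩ := mem_offDiag.mp hx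
    simp [hi, hj, hne]
  have hnone : ∀ x ∈ Sᶜ.offDiag, g #(S ∩ {x.1, x.2}) = g 0 := by
    intro x hx
    obtain ⟨hi, hj, -⟩ := mem_offDiag.mp hx
    simp [mem_compl.mp hi, mem_compl.mp hj]
  have hfst : ∀ x ∈ S ×ˢ Sᶜ, g #(S ∩ {x.1, x.2}) = g 1 := by
    intro x hx
    obtain ⟨hi, hj⟩ := mem_product.mp hx
    simp [hi, mem_compl.mp hj]
  have hsnd : ∀ x ∈ Sᶜ ×ˢ S, g #(S ∩ {x.1, x.2}) = g 1 := by
    intro x hx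
    obtain ⟨hi, hj⟩ := mem_product.mp hx
    simp [mem_compl.mp hi, hj]
  rw [← union_compl S, sum_offDiag_union disjoint_compl_right, sum_congr rfl hboth,
    sum_congr rfl hnone, sum_congr rfl hfst, sum_congr rfl hsnd]
  simp only [sum_const, card_product]
  rw [mul_comm #Sᶜ, add_assoc, ← add_nsmul, ← two_mul]

theorem two_mul_sum_lt_card_inter [Fintype ι] [LinearOrder ι] [CommRing R] {S : Finset ι}
    (hS : #S = 2) (g : ℕ → R) :
    2 * ∑ i, ∑ j, (if i < j then g #(S ∩ {i, j}) else 0) =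
      2 * g 2 + ((Fintype.card ι : R) - 2) * (((Fintype.card ι : R) - 3) * g 0 + 4 * g 1) := by
  obtain ⟨m, hm⟩ : ∃ m, Fintype.card ι = m + 2 :=
    Nat.exists_eq_add_of_le' (hS ▸ card_le_univ S)
  have hSc : #Sᶜ = m := by rw [card_compl, hS, hm, Nat.add_sub_cancel]
  have hoffDiag : (#Sᶜ.offDiag : R) = m * (m - 1) := by
    rw [offDiag_card, hSc, Nat.cast_sub (Nat.le_mul_self m), Nat.cast_mul]
    ring
  rw [two_mul, ← two_nsmul, two_nsmul_sum_lt fun i j => by rw [pair_comm],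
    sum_offDiag_card_inter, hm]
  simp only [nsmul_eq_mul, hoffDiag, offDiag_card S, hS, hSc]
  push_cast
  ring

end Overlap

section Tuples

variable {n k : ℕ}

theorem hatTuple_eq_comp (p : Fin k → Fin n) (i j : Fin k) :
    hatTuple p i j = p ∘ hatTuple id i j := by
  funext m
  simp only [hatTuple, Function.comp_apply]
  split_ifs <;> rfl

theorem hatTuple_apply_of_val_eq_sub_two (p : Fin k → Fin n) (i j : Fin k) {m : Fin k}
    (hm : (m : ℕ) = k - 2) : hatTuple p i j m = p i := by
  simp [hatTuple, hm]

theorem hatTuple_apply_of_val_eq_sub_one (hk : 2 ≤ k) (p : Fin k → Fin n) (i j : Fin k)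
    {m : Fin k} (hm : (m : ℕ) = k - 1) : hatTuple p i j m = p j := by
  have hlt : ¬ k - 1 < k - 2 := by omega
  have hne : k - 1 ≠ k - 2 := by omega
  simp [hatTuple, hm, hlt, hne]

theorem hatTuple_id_injective {i j : Fin k} (hij : i < j) :
    Function.Injective (hatTuple id i j) := by
  intro a b hab
  grind [hatTuple, dropPair]

open scoped Pointwise in
theorem exists_perm_hatTuple_eq_comp {u v i j : Fin k} (hu : (u : ℕ) = k - 2)
    (hv : (v : ℕ) = k - 1) (hij : i < j) :
    ∃ f : Equiv.Perm (Fin k), (∀ p : Fin k → Fin n, hatTuple p i j = p ∘ f) ∧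
      f • ({u, v} : Finset (Fin k)) = {i, j} := by
  have hk : 2 ≤ k := by omega
  refine ⟨.ofBijective _ (hatTuple_id_injective hij).bijective_of_finite,
    fun p => hatTuple_eq_comp p i j, ?_⟩
  simp [Finset.smul_finset_insert, hatTuple_apply_of_val_eq_sub_two _ _ _ hu,
    hatTuple_apply_of_val_eq_sub_one hk _ _ _ hv]

theorem hatTuple_padEnd3 (hk : 3 ≤ k) (K : Fin (k - 3) → Fin n) (a b c : Fin n) :
    hatTuple (padEnd3 K a b c) (⟨k - 3, by omega⟩ : Fin k) ⟨k - 2, by omega⟩ =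
      padEnd3 K c a b := by
  funext m
  grind [hatTuple, dropPair, padEnd3]

theorem hatTuple_padEnd4 (hk : 4 ≤ k) (K : Fin (k - 4) → Fin n) (a b c d : Fin n) :
    hatTuple (padEnd4 K a b c d) (⟨k - 4, by omega⟩ : Fin k) ⟨k - 3, by omega⟩ =
      padEnd4 K c d a b := by
  funext m
  grind [hatTuple, dropPair, padEnd4]

theorem sum_snoc {α M : Type*} [Fintype α] [AddCommMonoid M] (F : (Fin (n + 1) → α) → M) :
    ∑ p, F p = ∑ q : Fin n → α, ∑ a, F (Fin.snoc q a) := by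
  rw [← (Fin.snocEquiv fun _ => α).sum_comp, Fintype.sum_prod_type_right]
  rfl

theorem padEnd3_eq_snoc (K : Fin k → Fin n) (a b c : Fin n) :
    padEnd3 (k := k + 3) K a b c =
      Fin.snoc (α := fun _ => Fin n) (Fin.snoc (α := fun _ => Fin n) (Fin.snoc K a) b) c := by
  funext m
  simp only [padEnd3, Fin.snoc, Fin.val_castLT, cast_eq]
  split_ifs <;> first | rfl | omega

theorem padEnd4_eq_snoc (K : Fin k → Fin n) (a b c d : Fin n) :
    padEnd4 (k := k + 4) K a b c d = Fin.snoc (α := fun _ => Fin n)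
      (Fin.snoc (α := fun _ => Fin n) (Fin.snoc (α := fun _ => Fin n) (Fin.snoc K a) b) c) d := by
  funext m
  simp only [padEnd4, Fin.snoc, Fin.val_castLT, cast_eq]
  split_ifs <;> first | rfl | omega

variable {M : Type*} [AddCommMonoid M]

theorem sum_padEnd3 (hk : 3 ≤ k) (F : (Fin k → Fin n) → M) :
    ∑ K : Fin (k - 3) → Fin n, ∑ a, ∑ b, ∑ c, F (padEnd3 K a b c) = ∑ p, F p := by
  obtain ⟨m, rfl⟩ := Nat.exists_eq_add_of_le' hk
  simp only [sum_snoc, ← padEnd3_eq_snoc]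
  rfl

theorem sum_padEnd4 (hk : 4 ≤ k) (F : (Fin k → Fin n) → M) :
    ∑ K : Fin (k - 4) → Fin n, ∑ a, ∑ b, ∑ c, ∑ d, F (padEnd4 K a b c d) = ∑ p, F p := by
  obtain ⟨m, rfl⟩ := Nat.exists_eq_add_of_le' hk
  simp only [sum_snoc, ← padEnd4_eq_snoc]
  rfl

end Tuples

section HatPairing

open Finset
open scoped Pointwise

variable {n k : ℕ} {R : Type*} {A : (Fin k → Fin n) → R}

theorem stabilizerInvariant_last_pair {u v : Fin k} (hu : (u : ℕ) = k - 2) (hv : (v : ℕ) = k - 1)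
    (hsym₁ : ∀ (p : Fin k → Fin n) (σ : Equiv.Perm (Fin k)),
      (∀ m : Fin k, k - 2 ≤ (m : ℕ) → σ m = m) → A (fun m => p (σ m)) = A p)
    (hsym₂ : ∀ p : Fin k → Fin n, A (fun m => p (Equiv.swap u v m)) = A p) :
    StabilizerInvariant {u, v} A := by
  refine stabilizerInvariant_pair (fun σ hσu hσv p => hsym₁ p σ fun m hm => ?_) hsym₂
  obtain rfl | rfl : m = u ∨ m = v := by omega
  exacts [hσu, hσv]

variable [CommSemiring R]

theorem sum_lt_sum_mul_hatTuple_eq_zero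
    (hsym₀ : ∀ p : Fin k → Fin n,
      ∑ i : Fin k, ∑ j : Fin k, (if i < j then A (hatTuple p i j) else 0) = 0) :
    ∑ i : Fin k, ∑ j : Fin k, (if i < j then ∑ p, A p * A (hatTuple p i j) else 0) = 0 := by
  calc ∑ i : Fin k, ∑ j : Fin k, (if i < j then ∑ p, A p * A (hatTuple p i j) else 0)
    _ = ∑ i : Fin k, ∑ j : Fin k, ∑ p, A p * (if i < j then A (hatTuple p i j) else 0) := by
      simp only [mul_ite, mul_zero, sum_ite_irrel, sum_const_zero]
    _ = ∑ p, A p * ∑ i : Fin k, ∑ j : Fin k, (if i < j then A (hatTuple p i j) else 0) := by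
      simp only [mul_sum, sum_comm (γ := Fin k → Fin n)]
    _ = 0 := by simp only [hsym₀, mul_zero, sum_const_zero]

theorem StabilizerInvariant.exists_sum_mul_hatTuple_eq {u v : Fin k} (hu : (u : ℕ) = k - 2)
    (hv : (v : ℕ) = k - 1) (huv : u ≠ v) (hA : StabilizerInvariant {u, v} A) :
    ∃ g : ℕ → R, ∑ p, A p ^ 2 = g 2 ∧ ∀ i j : Fin k, i < j →
      ∑ p, A p * A (hatTuple p i j) = g #({u, v} ∩ {i, j}) := by
  obtain ⟨g, hg⟩ := hA.exists_slotPairing_eq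
  refine ⟨g, ?_, fun i j hij => ?_⟩
  · calc ∑ p, A p ^ 2
      _ = slotPairing A (1 : Equiv.Perm (Fin k)) := sum_congr rfl fun p _ => pow_two (A p)
      _ = g 2 := by rw [hg, one_smul, inter_self, card_pair huv]
  · obtain ⟨f, hf, hf_pair⟩ := exists_perm_hatTuple_eq_comp (n := n) hu hv hij
    simp only [hf, ← hf_pair]
    exact hg f

theorem sum_padEnd3_mul (hk : 3 ≤ k) (A : (Fin k → Fin n) → R) :
    ∑ K : Fin (k - 3) → Fin n, ∑ a, ∑ b, ∑ c, A (padEnd3 K a b c) * A (padEnd3 K c a b) =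
      ∑ p, A p * A (hatTuple p ⟨k - 3, by omega⟩ ⟨k - 2, by omega⟩) := by
  simp only [← sum_padEnd3 hk, hatTuple_padEnd3 hk]

theorem sum_padEnd4_mul (hk : 4 ≤ k) (A : (Fin k → Fin n) → R) :
    ∑ K : Fin (k - 4) → Fin n, ∑ a, ∑ b, ∑ c, ∑ d,
        A (padEnd4 K c d a b) * A (padEnd4 K a b c d) =
      ∑ p, A p * A (hatTuple p ⟨k - 4, by omega⟩ ⟨k - 3, by omega⟩) := by
  simp only [← sum_padEnd4 hk, hatTuple_padEnd4 hk, mul_comm]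

end HatPairing

theorem sym_ric_identity_general {R : Type*} [CommRing R] (n k : ℕ) (hk : 4 ≤ k)
    (A : (Fin k → Fin n) → R)
    (hsym₁ : ∀ (p : Fin k → Fin n) (σ : Equiv.Perm (Fin k)),
      (∀ m : Fin k, k - 2 ≤ (m : ℕ) → σ m = m) → A (fun m => p (σ m)) = A p)
    (hsym₂ : ∀ p : Fin k → Fin n,
      A (fun m => p (Equiv.swap (⟨k - 2, by omega⟩ : Fin k) (⟨k - 1, by omega⟩ : Fin k) m))
        = A p)
    (hsym₀ : ∀ p : Fin k → Fin n,
      ∑ i : Fin k, ∑ j : Fin k, (if i < j then A (hatTuple p i j) else 0) = 0) :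
    2 * (∑ p : Fin k → Fin n, (A p) ^ 2)
      + ((k : R) - 2) *
        (((k : R) - 3) *
            (∑ K : Fin (k - 4) → Fin n, ∑ a : Fin n, ∑ b : Fin n, ∑ c : Fin n, ∑ d : Fin n,
              A (padEnd4 K c d a b) * A (padEnd4 K a b c d))
          + 4 *
            (∑ K : Fin (k - 3) → Fin n, ∑ a : Fin n, ∑ b : Fin n, ∑ c : Fin n,
              A (padEnd3 K a b c) * A (padEnd3 K c a b))) = 0 := by
  let u : Fin k := ⟨k - 2, by omega⟩
  let v : Fin k := ⟨k - 1, by omega⟩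
  have huv : u ≠ v := Fin.ne_of_val_ne (show k - 2 ≠ k - 1 by omega)
  have hA : StabilizerInvariant {u, v} A := stabilizerInvariant_last_pair rfl rfl hsym₁ hsym₂
  obtain ⟨g, hT, hg⟩ := hA.exists_sum_mul_hatTuple_eq rfl rfl huv
  have hM : ∑ p, A p * A (hatTuple p ⟨k - 3, by omega⟩ ⟨k - 2, by omega⟩) = g 1 :=
    (hg _ _ (Fin.mk_lt_mk.mpr (by omega))).trans (congrArg g (by grind))
  have hN : ∑ p, A p * A (hatTuple p ⟨k - 4, by omega⟩ ⟨k - 3, by omega⟩) = g 0 :=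
    (hg _ _ (Fin.mk_lt_mk.mpr (by omega))).trans (congrArg g (by grind))
  have hsum :
      ∑ i, ∑ j, (if i < j then g (({u, v} : Finset (Fin k)) ∩ {i, j}).card else 0) = 0 := by
    refine Eq.trans ?_ (sum_lt_sum_mul_hatTuple_eq_zero hsym₀)
    refine Fintype.sum_congr _ _ fun i => Fintype.sum_congr _ _ fun j => ?_
    split_ifs with hij
    exacts [(hg i j hij).symm, rfl]
  have hcount := two_mul_sum_lt_card_inter (Finset.card_pair huv) g
  rw [hsum, mul_zero, Fintype.card_fin] at hcount
  rw [sum_padEnd3_mul (by omega), sum_padEnd4_mul hk, hT, hM, hN, ← hcount]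

/-- The symmetrized Ricci identity (equation (sym ric)):
for a tensor `A`, symmetric in its first `k-2` slots and in its last two slots,
whose full symmetrization vanishes, one has `2T + (k-2)((k-3)N + 4M) = 0`. -/
theorem sym_ric_identity (n k : ℕ) (hn : 1 ≤ n) (hk : 4 ≤ k)
    (A : (Fin k → Fin n) → ℝ)
    (hsym₁ : ∀ (p : Fin k → Fin n) (σ : Equiv.Perm (Fin k)),
      (∀ m : Fin k, k - 2 ≤ (m : ℕ) → σ m = m) → A (fun m => p (σ m)) = A p)
    (hsym₂ : ∀ p : Fin k → Fin n,
      A (fun m => p (Equiv.swap (⟨k - 2, by omega⟩ : Fin k) (⟨k - 1, by omega⟩ : Fin k) m))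
        = A p)
    (hsym₀ : ∀ p : Fin k → Fin n,
      ∑ i : Fin k, ∑ j : Fin k, (if i < j then A (hatTuple p i j) else 0) = 0) :
    2 * (∑ p : Fin k → Fin n, (A p) ^ 2)
      + ((k : ℝ) - 2) *
        (((k : ℝ) - 3) *
            (∑ K : Fin (k - 4) → Fin n, ∑ a : Fin n, ∑ b : Fin n, ∑ c : Fin n, ∑ d : Fin n,
              A (padEnd4 K c d a b) * A (padEnd4 K a b c d))
          + 4 *
            (∑ K : Fin (k - 3) → Fin n, ∑ a : Fin n, ∑ b : Fin n, ∑ c : Fin n,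
              A (padEnd3 K a b c) * A (padEnd3 K c a b))) = 0 :=
  sym_ric_identity_general n k hk A hsym₁ hsym₂ hsym₀
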